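/- Let D be a dictionary in a real Hilbert space X whose symmetric convex hull co(D) is compact, and let f ∈ X with ‖f‖_{L1(D)} < ∞. Then any sequence (f_n) produced by the orthogonal greedy algorithm with target f satisfies ‖f − f_n‖ ≤ ((n! V_n)^{1/n} / √n) · ‖f‖_{L1(D)} · ε_n(co(D)) for all n ≥ 1. -/

import Mathlib

open scoped RealInnerProductSpace

/-- Dyadic entropy number: infimum of all `ε > 0` such that `K` is covered by `2^n`
balls of radius `ε`. -/
noncomputable def entropyNumber {X : Type*} [NormedAddCommGroup X] (n : ℕ) (K : Set X) : ℝ :=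
  sInf {ε : ℝ | 0 < ε ∧ ∃ c : Fin (2 ^ n) → X, K ⊆ ⋃ i, Metric.closedBall (c i) ε}

/-- Symmetric (absolutely) convex hull: closure of the set of finite sums `∑ cᵢ gᵢ`
with `gᵢ ∈ K` and `∑ |cᵢ| ≤ 1`. -/
noncomputable def symConvexHull {X : Type*} [NormedAddCommGroup X] [NormedSpace ℝ X]
    (K : Set X) : Set X :=
  closure {x : X | ∃ (m : ℕ) (c : Fin m → ℝ) (g : Fin m → X),
    (∀ i, g i ∈ K) ∧ (∑ i, |c i|) ≤ 1 ∧ x = ∑ i, c i • g i}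

/-- Volume of the unit Euclidean ball in `ℝⁿ`. -/
noncomputable def unitBallVol (n : ℕ) : ℝ :=
  Real.pi ^ ((n : ℝ) / 2) / Real.Gamma ((n : ℝ) / 2 + 1)

/-- Span of the first `n` terms of a sequence. -/
noncomputable def spanFirst {X : Type*} [NormedAddCommGroup X] [NormedSpace ℝ X]
    (f : ℕ → X) (n : ℕ) : Submodule ℝ X :=
  Submodule.span ℝ (f '' {i | i < n})

/-- The weak greedy algorithm with parameter `γ`: `f n` (the `(n+1)`-st iterate) lies in `K`
and its distance to the span of the previous iterates is at least `γ` times that of any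
other element of `K`. -/
def IsWeakGreedy {X : Type*} [NormedAddCommGroup X] [NormedSpace ℝ X]
    (γ : ℝ) (K : Set X) (f : ℕ → X) : Prop :=
  ∀ n : ℕ, f n ∈ K ∧ ∀ g ∈ K,
    γ * Metric.infDist g (spanFirst f n : Set X) ≤ Metric.infDist (f n) (spanFirst f n : Set X)

/-- The greedy error `σ_n(K) = sup_{f ∈ K} dist(f, span{f_1,…,f_n})`. -/
noncomputable def greedyError {X : Type*} [NormedAddCommGroup X] [NormedSpace ℝ X]
    (K : Set X) (f : ℕ → X) (n : ℕ) : ℝ :=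
  sSup ((fun g => Metric.infDist g (spanFirst f n : Set X)) '' K)

/-- Kolmogorov `n`-width. -/
noncomputable def kolmogorovWidth {X : Type*} [NormedAddCommGroup X] [NormedSpace ℝ X]
    (n : ℕ) (K : Set X) : ℝ :=
  sInf {d : ℝ | ∃ Y : Submodule ℝ X, FiniteDimensional ℝ Y ∧ Module.finrank ℝ Y ≤ n ∧
    d = sSup ((fun g => Metric.infDist g (Y : Set X)) '' K)}

/-- `f` admits an `ℓ¹` representation over the dictionary `D`. -/
def HasL1Rep {X : Type*} [NormedAddCommGroup X] [NormedSpace ℝ X] (D : Set X) (f : X) : Prop :=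
  ∃ (c : ℕ → ℝ) (g : ℕ → X), (∀ i, g i ∈ D) ∧ Summable (fun i => |c i|) ∧
    HasSum (fun i => c i • g i) f

/-- The variation norm `‖f‖_{L₁(D)}`. -/
noncomputable def varNorm {X : Type*} [NormedAddCommGroup X] [NormedSpace ℝ X]
    (D : Set X) (f : X) : ℝ :=
  sInf {t : ℝ | ∃ (c : ℕ → ℝ) (g : ℕ → X), (∀ i, g i ∈ D) ∧ Summable (fun i => |c i|) ∧
    HasSum (fun i => c i • g i) f ∧ t = ∑' i, |c i|}

/-- The orthogonal greedy algorithm with target `f`: `fa 0 = 0`; at each step `g n ∈ D`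
maximizes `|⟨g, f - fa n⟩|` over `D`, and `fa (n+1)` is the orthogonal projection of `f`
onto `span{g 0, …, g n}`. -/
def IsOGA {X : Type*} [NormedAddCommGroup X] [InnerProductSpace ℝ X]
    (D : Set X) (f : X) (g fa : ℕ → X) : Prop :=
  fa 0 = 0 ∧ ∀ n : ℕ,
    g n ∈ D ∧ (∀ h ∈ D, |⟪h, f - fa n⟫| ≤ |⟪g n, f - fa n⟫|) ∧
    fa (n + 1) ∈ Submodule.span ℝ (g '' {i | i ≤ n}) ∧
    ∀ w ∈ Submodule.span ℝ (g '' {i | i ≤ n}), ⟪f - fa (n + 1), w⟫ = 0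

/-- Best `n`-term approximation error `E_n(f, D)`. -/
noncomputable def bestNTermError {X : Type*} [NormedAddCommGroup X] [NormedSpace ℝ X]
    (D : Set X) (n : ℕ) (f : X) : ℝ :=
  sInf {r : ℝ | ∃ (c : Fin n → ℝ) (g : Fin n → X), (∀ i, g i ∈ D) ∧ r = ‖f - ∑ i, c i • g i‖}

/-- The K-functional `K(t, g)` between `X` and `L₁(D)`. -/
noncomputable def Kfunctional {X : Type*} [NormedAddCommGroup X] [NormedSpace ℝ X]
    (D : Set X) (t : ℝ) (gg : X) : ℝ :=
  sInf {s : ℝ | ∃ h : X, HasL1Rep D h ∧ s = ‖gg - h‖ + t * varNorm D h}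

/-- The interpolation norm `‖g‖_θ = sup_{t > 0} t^{-θ} K(t, g)`. -/
noncomputable def interpNorm {X : Type*} [NormedAddCommGroup X] [NormedSpace ℝ X]
    (D : Set X) (θ : ℝ) (gg : X) : ℝ :=
  sSup ((fun t => t ^ (-θ) * Kfunctional D t gg) '' Set.Ioi (0 : ℝ))

section Volume

open MeasureTheory

lemma volume_crossPolytope {n : ℕ} (hn : 1 ≤ n) :
    volume {x : Fin n → ℝ | ∑ i, |x i| ≤ 1} = ENNReal.ofReal (2 ^ n / n.factorial) := by
  have : Nonempty (Fin n) := ⟨⟨0, hn⟩⟩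
  have h := volume_sum_rpow_le (Fin n) (p := 1) le_rfl 1
  simpa [Real.Gamma_nat_eq_factorial, one_add_one_eq_two, Real.Gamma_two] using h

lemma unitBallVol_pos (n : ℕ) : 0 < unitBallVol n := by
  unfold unitBallVol
  have := Real.Gamma_pos_of_pos (s := (n : ℝ) / 2 + 1) (by positivity)
  have := Real.pi_pos
  positivity

lemma volume_euclidean_closedBall {n : ℕ} (hn : 1 ≤ n) (a : EuclideanSpace ℝ (Fin n)) {ε : ℝ}
    (hε : 0 < ε) :
    volume (Metric.closedBall a ε) = ENNReal.ofReal (ε ^ n * unitBallVol n) := by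
  have : Nonempty (Fin n) := ⟨⟨0, hn⟩⟩
  have hpi : Real.sqrt Real.pi ^ n = Real.pi ^ ((n : ℝ) / 2) := by
    rw [Real.sqrt_eq_rpow, ← Real.rpow_natCast, ← Real.rpow_mul Real.pi_pos.le]
    ring_nf
  rw [EuclideanSpace.volume_closedBall, Fintype.card_fin, hpi, ← ENNReal.ofReal_pow hε.le,
    ← ENNReal.ofReal_mul (by positivity), unitBallVol]

/-- A covering of the symmetric convex hull by `2 ^ n` balls of radius `ε` bounds the determinant
of the coordinates of `n` of its elements with respect to an orthonormal system. -/
lemma abs_det_inner_le {X : Type*} [NormedAddCommGroup X] [InnerProductSpace ℝ X]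
    {D : Set X} {n : ℕ} (hn : 1 ≤ n) {e v : Fin n → X} (he : Orthonormal ℝ e)
    (hv : ∀ i, v i ∈ D) {ε : ℝ} (hε : 0 < ε) {c : Fin (2 ^ n) → X}
    (hc : symConvexHull D ⊆ ⋃ i, Metric.closedBall (c i) ε) :
    |(Matrix.of fun i j => ⟪e i, v j⟫).det| ≤ n.factorial * unitBallVol n * ε ^ n := by
  set A : Matrix (Fin n) (Fin n) ℝ := Matrix.of fun i j => ⟪e i, v j⟫ with hA
  let coord : X → EuclideanSpace ℝ (Fin n) := fun x => WithLp.toLp 2 fun i => ⟪e i, x⟫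
  have hcoord : ∀ x y, dist (coord x) (coord y) ≤ dist x y := by
    intro x y
    rw [EuclideanSpace.dist_eq, dist_eq_norm]
    refine Real.sqrt_le_iff.2 ⟨norm_nonneg _, ?_⟩
    simpa [coord, Real.dist_eq, ← inner_sub_right] using
      he.sum_inner_products_le (x := x - y) (s := Finset.univ)
  have hcover : Matrix.toLin' A '' {x : Fin n → ℝ | ∑ i, |x i| ≤ 1} ⊆
      ⋃ i, (WithLp.toLp 2) ⁻¹' Metric.closedBall (coord (c i)) ε := by
    rintro _ ⟨x, hx, rfl⟩
    have hmem : ∑ i, x i • v i ∈ symConvexHull D := subset_closure ⟨n, x, v, hv, hx, rfl⟩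
    obtain ⟨i, hi⟩ := Set.mem_iUnion.1 (hc hmem)
    refine Set.mem_iUnion.2 ⟨i, ?_⟩
    have heq : WithLp.toLp 2 (Matrix.toLin' A x) = coord (∑ i, x i • v i) := by
      ext k
      simp [coord, hA, Matrix.mulVec, dotProduct, inner_sum, inner_smul_right, mul_comm]
    rw [Set.mem_preimage, heq]
    exact (hcoord _ _).trans hi
  have hvol := (measure_mono (μ := volume) hcover).trans (measure_iUnion_le _)
  have hball : ∀ i, volume ((WithLp.toLp 2 : (Fin n → ℝ) → EuclideanSpace ℝ (Fin n)) ⁻¹'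
      Metric.closedBall (coord (c i)) ε) = ENNReal.ofReal (ε ^ n * unitBallVol n) := fun i => by
    rw [(PiLp.volume_preserving_toLp (Fin n)).measure_preimage
      Metric.isClosed_closedBall.measurableSet.nullMeasurableSet,
      volume_euclidean_closedBall hn _ hε]
  have hV := unitBallVol_pos n
  simp only [hball] at hvol
  rw [Measure.addHaar_image_linearMap, LinearMap.det_toLin', volume_crossPolytope hn,
    tsum_fintype, Finset.sum_const, Finset.card_univ, Fintype.card_fin, nsmul_eq_mul,
    ← ENNReal.ofReal_mul (abs_nonneg _), ← ENNReal.ofReal_natCast,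
    ← ENNReal.ofReal_mul (by positivity), ENNReal.ofReal_le_ofReal_iff (by positivity)] at hvol
  push_cast at hvol
  have hfac : (0 : ℝ) < n.factorial := by positivity
  rw [← mul_div_assoc, div_le_iff₀ hfac] at hvol
  have h2 : (0 : ℝ) < 2 ^ n := by positivity
  refine le_of_mul_le_mul_right ?_ h2
  linarith

/-- A covering of the symmetric convex hull by `2 ^ n` balls of radius `ε` bounds the product of
the successive distances of `n` of its elements to the span of their predecessors. -/
lemma prod_norm_gramSchmidt_le {X : Type*} [NormedAddCommGroup X] [InnerProductSpace ℝ X]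
    {D : Set X} {n : ℕ} (hn : 1 ≤ n) {g : ℕ → X} (hg : ∀ i, g i ∈ D)
    (hne : ∀ i < n, InnerProductSpace.gramSchmidt ℝ g i ≠ 0)
    {ε : ℝ} (hε : 0 < ε) {c : Fin (2 ^ n) → X}
    (hc : symConvexHull D ⊆ ⋃ i, Metric.closedBall (c i) ε) :
    ∏ i ∈ Finset.range n, ‖InnerProductSpace.gramSchmidt ℝ g i‖ ≤
      n.factorial * unitBallVol n * ε ^ n := by
  have hne' : ∀ i : Fin n, InnerProductSpace.gramSchmidtNormed ℝ g i ≠ 0 := fun i => by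
    simpa [InnerProductSpace.gramSchmidtNormed] using hne i i.2
  have he : Orthonormal ℝ fun i : Fin n => InnerProductSpace.gramSchmidtNormed ℝ g i :=
    (InnerProductSpace.gramSchmidtNormed_orthonormal' (𝕜 := ℝ) g).comp
      (fun i : Fin n => ⟨(i : ℕ), hne' i⟩) fun i j h => by simpa [Fin.ext_iff] using h
  have h := abs_det_inner_le hn he (fun i : Fin n => hg i) hε hc
  have hself : ∀ i : ℕ, ⟪InnerProductSpace.gramSchmidt ℝ g i, g i⟫ =
      ‖InnerProductSpace.gramSchmidt ℝ g i‖ ^ 2 := fun i => by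
    conv_lhs => rw [InnerProductSpace.gramSchmidt_def'' ℝ g i]
    rw [inner_add_right, inner_sum, real_inner_self_eq_norm_sq, Finset.sum_eq_zero, add_zero]
    intro k hk
    rw [inner_smul_right, InnerProductSpace.gramSchmidt_orthogonal ℝ g (Finset.mem_Iio.1 hk).ne',
      mul_zero]
  rw [Matrix.det_of_isUpperTriangular] at h
  · refine le_trans (le_of_eq ?_) ((le_abs_self _).trans h)
    rw [Finset.prod_range]
    refine Finset.prod_congr rfl fun i _ => ?_
    have := norm_ne_zero_iff.2 (hne i i.2)
    simp only [Matrix.of_apply, InnerProductSpace.gramSchmidtNormed, RCLike.ofReal_real_eq_id,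
      id, inner_smul_left, hself, map_inv₀, conj_trivial]
    field_simp
  · intro i j hij
    have : (j : ℕ) < i := hij
    simp [InnerProductSpace.gramSchmidtNormed, inner_smul_left,
      InnerProductSpace.gramSchmidt_inv_triangular ℝ g this]

end Volume

section Greedy

variable {X : Type*} [NormedAddCommGroup X] [InnerProductSpace ℝ X]

lemma varNorm_nonneg (D : Set X) (f : X) : 0 ≤ varNorm D f := by
  refine Real.sInf_nonneg ?_
  rintro t ⟨c, g, -, -, -, rfl⟩
  exact tsum_nonneg fun i => abs_nonneg _

lemma inner_le_varNorm_mul {D : Set X} {f r : X} (hf : HasL1Rep D f) {p : ℝ} (hp : 0 ≤ p)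
    (hr : ∀ h ∈ D, |⟪h, r⟫| ≤ p) : ⟪f, r⟫ ≤ varNorm D f * p := by
  have key : ∀ t ∈ {t : ℝ | ∃ (c : ℕ → ℝ) (g : ℕ → X), (∀ i, g i ∈ D) ∧
      Summable (fun i => |c i|) ∧ HasSum (fun i => c i • g i) f ∧ t = ∑' i, |c i|},
      ⟪f, r⟫ ≤ t * p := by
    rintro t ⟨c, g, hg, hs, hsum, rfl⟩
    have h : HasSum (fun i => c i * ⟪r, g i⟫) ⟪r, f⟫ := by
      simpa [inner_smul_right] using (innerSL ℝ r).hasSum hsum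
    rw [real_inner_comm, ← tsum_mul_right, ← h.tsum_eq]
    refine h.summable.tsum_le_tsum (fun i => ?_) (hs.mul_right p)
    calc c i * ⟪r, g i⟫ ≤ |c i| * |⟪r, g i⟫| := (le_abs_self _).trans (abs_mul _ _).le
      _ ≤ |c i| * p := by
        gcongr
        rw [real_inner_comm]
        exact hr _ (hg i)
  obtain ⟨c, g, hg, hs, hsum⟩ := hf
  rcases hp.eq_or_lt with rfl | hp
  · simpa using key _ ⟨c, g, hg, hs, hsum, rfl⟩
  · rw [← div_le_iff₀ hp]
    exact le_csInf ⟨_, c, g, hg, hs, hsum, rfl⟩ fun t ht => (div_le_iff₀ hp).2 (key t ht)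

namespace IsOGA

variable {D : Set X} {f : X} {g fa : ℕ → X}

lemma iterate_mem_span (h : IsOGA D f g fa) (k : ℕ) :
    fa k ∈ Submodule.span ℝ (g '' Set.Iio k) := by
  cases k with
  | zero => simp [h.1]
  | succ k => simpa [Set.Iio, Order.lt_add_one_iff] using (h.2 k).2.2.1

lemma inner_residual_eq_zero (h : IsOGA D f g fa) (k : ℕ) {w : X}
    (hw : w ∈ Submodule.span ℝ (g '' Set.Iio k)) : ⟪f - fa k, w⟫ = 0 := by
  cases k with
  | zero =>
    have : w = 0 := by simpa using hw
    simp [this]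
  | succ k =>
    exact (h.2 k).2.2.2 w (by simpa [Set.Iio, Order.lt_add_one_iff] using hw)

lemma norm_residual_le (h : IsOGA D f g fa) (k : ℕ) {w : X}
    (hw : w ∈ Submodule.span ℝ (g '' Set.Iio k)) : ‖f - fa k‖ ≤ ‖f - w‖ := by
  have hzero := h.inner_residual_eq_zero k (Submodule.sub_mem _ (h.iterate_mem_span k) hw)
  have heq := norm_add_sq_real (f - fa k) (fa k - w)
  rw [hzero, sub_add_sub_cancel] at heq
  refine (pow_le_pow_iff_left₀ (norm_nonneg _) (norm_nonneg _) two_ne_zero).1 ?_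
  nlinarith [sq_nonneg ‖fa k - w‖]

lemma norm_sq_residual_le (h : IsOGA D f g fa) (hf : HasL1Rep D f) (k : ℕ) :
    ‖f - fa k‖ ^ 2 ≤
      varNorm D f * |⟪InnerProductSpace.gramSchmidt ℝ g k, f - fa k⟫| := by
  have hgs : ⟪g k, f - fa k⟫ = ⟪InnerProductSpace.gramSchmidt ℝ g k, f - fa k⟫ := by
    have hmem : g k - InnerProductSpace.gramSchmidt ℝ g k ∈
        Submodule.span ℝ (g '' Set.Iio k) := by
      rw [← InnerProductSpace.span_gramSchmidt_Iio ℝ g k, sub_eq_iff_eq_add'.2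
        (InnerProductSpace.gramSchmidt_def'' ℝ g k)]
      exact Submodule.sum_mem _ fun i hi => Submodule.smul_mem _ _ <|
        Submodule.subset_span <| Set.mem_image_of_mem _ (Finset.mem_Iio.1 hi)
    have := h.inner_residual_eq_zero k hmem
    rw [real_inner_comm, inner_sub_left] at this
    linarith
  have hfr : ‖f - fa k‖ ^ 2 = ⟪f, f - fa k⟫ := by
    have := h.inner_residual_eq_zero k (h.iterate_mem_span k)
    rw [real_inner_comm] at this
    rw [← real_inner_self_eq_norm_sq, inner_sub_left, this, sub_zero]
  rw [hfr, ← hgs]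
  exact inner_le_varNorm_mul hf (abs_nonneg _) (h.2 k).2.1

lemma norm_sq_residual_succ_le (h : IsOGA D f g fa) (k : ℕ)
    (hne : InnerProductSpace.gramSchmidt ℝ g k ≠ 0) :
    ‖f - fa (k + 1)‖ ^ 2 ≤ ‖f - fa k‖ ^ 2 -
      ⟪InnerProductSpace.gramSchmidt ℝ g k, f - fa k⟫ ^ 2 /
        ‖InnerProductSpace.gramSchmidt ℝ g k‖ ^ 2 := by
  set u := InnerProductSpace.gramSchmidt ℝ g k with hu
  have hu0 : ‖u‖ ≠ 0 := norm_ne_zero_iff.2 hne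
  set t := ⟪u, f - fa k⟫ / ‖u‖ ^ 2 with ht
  have hIio : Set.Iio (k + 1) = Set.Iic k := by ext; simp [Order.lt_add_one_iff]
  have hmem : fa k + t • u ∈ Submodule.span ℝ (g '' Set.Iio (k + 1)) := by
    refine Submodule.add_mem _
      (Submodule.span_mono (Set.image_mono (Set.Iio_subset_Iio k.le_succ))
        (h.iterate_mem_span k)) (Submodule.smul_mem _ _ ?_)
    rw [hIio]
    exact InnerProductSpace.gramSchmidt_mem_span ℝ g le_rfl
  have hle := pow_le_pow_left₀ (norm_nonneg _) (h.norm_residual_le (k + 1) hmem) 2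
  refine hle.trans (le_of_eq ?_)
  rw [← sub_sub, norm_sub_sq_real, inner_smul_right, real_inner_comm, norm_smul, mul_pow,
    Real.norm_eq_abs, sq_abs, ht]
  field_simp
  ring

lemma norm_residual_antitone (h : IsOGA D f g fa) : Antitone fun k => ‖f - fa k‖ :=
  fun j k hjk => h.norm_residual_le k <|
    Submodule.span_mono (Set.image_mono (Set.Iio_subset_Iio hjk)) (h.iterate_mem_span j)

lemma gramSchmidt_ne_zero (h : IsOGA D f g fa) (hf : HasL1Rep D f) {k : ℕ}
    (hr : f - fa k ≠ 0) : InnerProductSpace.gramSchmidt ℝ g k ≠ 0 := by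
  intro h0
  have := h.norm_sq_residual_le hf k
  rw [h0, inner_zero_left, abs_zero, mul_zero] at this
  exact hr (norm_eq_zero.1 (pow_eq_zero_iff two_ne_zero |>.1 (le_antisymm this (sq_nonneg _))))

lemma varNorm_pos (h : IsOGA D f g fa) (hf : HasL1Rep D f) {k : ℕ} (hr : f - fa k ≠ 0) :
    0 < varNorm D f := by
  refine (varNorm_nonneg D f).lt_of_ne fun h0 => ?_
  have := h.norm_sq_residual_le hf k
  rw [← h0, zero_mul] at this
  have := norm_pos_iff.2 hr
  nlinarith

lemma sum_inv_sq_le (h : IsOGA D f g fa) (hf : HasL1Rep D f) (n : ℕ) (hr : f - fa n ≠ 0) :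
    ∑ k ∈ Finset.range n, (‖InnerProductSpace.gramSchmidt ℝ g k‖ ^ 2)⁻¹ ≤
      varNorm D f ^ 2 / ‖f - fa n‖ ^ 2 := by
  induction n with
  | zero => simp; positivity
  | succ k ih =>
    have hr' : f - fa k ≠ 0 := norm_pos_iff.1
      ((norm_pos_iff.2 hr).trans_le (h.norm_residual_antitone k.le_succ))
    have hM := h.varNorm_pos hf hr'
    have hu := norm_pos_iff.2 (h.gramSchmidt_ne_zero hf hr')
    have hstep := h.norm_sq_residual_succ_le k (h.gramSchmidt_ne_zero hf hr')
    have hx := h.norm_sq_residual_le hf k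
    rw [Finset.sum_range_succ]
    refine (add_le_add_left (ih hr') _).trans ?_
    have hxpos : 0 < ‖f - fa k‖ ^ 2 := by positivity
    have hypos : 0 < ‖f - fa (k + 1)‖ ^ 2 := by positivity
    rw [← sq_abs ⟪_, _⟫] at hstep
    generalize |⟪InnerProductSpace.gramSchmidt ℝ g k, f - fa k⟫| = p at *
    generalize ‖f - fa k‖ ^ 2 = x at *
    generalize ‖f - fa (k + 1)‖ ^ 2 = y at *
    generalize varNorm D f = M at *
    have hd : 0 < ‖InnerProductSpace.gramSchmidt ℝ g k‖ ^ 2 := by positivity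
    generalize ‖InnerProductSpace.gramSchmidt ℝ g k‖ ^ 2 = d at *
    have hsq : x ^ 2 ≤ M ^ 2 * p ^ 2 := by
      rw [← mul_pow]; exact pow_le_pow_left₀ hxpos.le hx 2
    have hyd : y * d ≤ x * d - p ^ 2 := by
      have := mul_le_mul_of_nonneg_right hstep hd.le
      rwa [sub_mul, div_mul_cancel₀ _ hd.ne'] at this
    have hyx : y ≤ x := by nlinarith [sq_nonneg p]
    rw [div_add' _ _ _ hxpos.ne', div_le_div_iff₀ hxpos hypos]
    have hgoal : (M ^ 2 * d + x) * y ≤ M ^ 2 * x * d := by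
      nlinarith [mul_le_mul_of_nonneg_left hyd (sq_nonneg M), mul_le_mul_of_nonneg_left hyx hxpos.le]
    have : (M ^ 2 + d⁻¹ * x) * y = (M ^ 2 * d + x) * y * d⁻¹ := by field_simp
    rw [this, ← div_eq_mul_inv, div_le_iff₀ hd]
    exact hgoal

end IsOGA

end Greedy

lemma prod_le_sum_div_pow {n : ℕ} (hn : 1 ≤ n) (z : ℕ → ℝ) (hz : ∀ i, 0 ≤ z i) :
    ∏ i ∈ Finset.range n, z i ≤ ((∑ i ∈ Finset.range n, z i) / n) ^ n := by
  have hn' : (n : ℝ) ≠ 0 := by positivity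
  have h := Real.geom_mean_le_arith_mean_weighted (Finset.range n) (fun _ => (n : ℝ)⁻¹) z
    (fun _ _ => by positivity) (by simp [hn']) fun i _ => hz i
  have hpow := pow_le_pow_left₀ (Finset.prod_nonneg fun i _ => Real.rpow_nonneg (hz i) _) h n
  rw [← Finset.prod_pow, ← Finset.mul_sum, inv_mul_eq_div] at hpow
  refine le_trans (le_of_eq (Finset.prod_congr rfl fun i _ => ?_)) hpow
  exact (Real.rpow_inv_natCast_pow (hz i) (by omega)).symm

/-- direct entropy-based error bound for the orthogonal greedy algorithm
(Theorem 4.1 of the paper). -/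
theorem oga_error_le_entropy
    {X : Type*} [NormedAddCommGroup X] [InnerProductSpace ℝ X] [CompleteSpace X]
    (D : Set X) (hD : IsCompact (symConvexHull D))
    (f : X) (hf : HasL1Rep D f)
    (g fa : ℕ → X) (hoga : IsOGA D f g fa) (n : ℕ) (hn : 1 ≤ n) :
    ‖f - fa n‖
      ≤ ((n.factorial : ℝ) * unitBallVol n) ^ ((n : ℝ)⁻¹) / Real.sqrt n *
          varNorm D f * entropyNumber n (symConvexHull D) := by
  rw [mul_assoc, div_mul_eq_mul_div, le_div_iff₀ (by positivity)]
  have hV := unitBallVol_pos n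
  have hM := varNorm_nonneg D f
  have hn0 : n ≠ 0 := by omega
  set C := ((n.factorial : ℝ) * unitBallVol n) ^ ((n : ℝ)⁻¹) with hC
  have hC0 : 0 ≤ C := by positivity
  by_cases hr : f - fa n = 0
  · have hent : 0 ≤ entropyNumber n (symConvexHull D) := Real.sInf_nonneg fun ε hε => hε.1.le
    rw [hr, norm_zero, zero_mul]
    positivity
  have hMpos := hoga.varNorm_pos hf hr
  have hCpos : 0 < C := by positivity
  rw [← mul_assoc, ← div_le_iff₀' (by positivity)]
  obtain ⟨R, hR⟩ := hD.isBounded.subset_closedBall (0 : X)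
  refine le_csInf ⟨max R 1, by positivity, fun _ => 0, fun x hx => Set.mem_iUnion.2
    ⟨⟨0, by positivity⟩, Metric.closedBall_subset_closedBall (le_max_left _ _) (hR hx)⟩⟩ ?_
  rintro ε ⟨hε, c, hc⟩
  have hne : ∀ i < n, InnerProductSpace.gramSchmidt ℝ g i ≠ 0 := fun i hi =>
    hoga.gramSchmidt_ne_zero hf <| norm_pos_iff.1 <|
      (norm_pos_iff.2 hr).trans_le (hoga.norm_residual_antitone hi.le)
  have hprod := prod_norm_gramSchmidt_le hn (fun i => (hoga.2 i).1) hne hε hc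
  have hpos : 0 < ∏ i ∈ Finset.range n, ‖InnerProductSpace.gramSchmidt ℝ g i‖ :=
    Finset.prod_pos fun i hi => norm_pos_iff.2 (hne i (Finset.mem_range.1 hi))
  have hamgm := (prod_le_sum_div_pow hn
      (fun i => (‖InnerProductSpace.gramSchmidt ℝ g i‖ ^ 2)⁻¹) fun i => by positivity).trans
    (pow_le_pow_left₀ (by positivity)
      (div_le_div_of_nonneg_right (hoga.sum_inv_sq_le hf n hr) n.cast_nonneg) n)
  rw [Finset.prod_inv_distrib, Finset.prod_pow] at hamgm
  have hrpos := norm_pos_iff.2 hr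
  have hroot : (‖f - fa n‖ * √n / varNorm D f) ^ n ≤
      ∏ i ∈ Finset.range n, ‖InnerProductSpace.gramSchmidt ℝ g i‖ := by
    refine (pow_le_pow_iff_left₀ (by positivity) hpos.le two_ne_zero).1 ?_
    have hinv : ((varNorm D f ^ 2 / ‖f - fa n‖ ^ 2 / n) ^ n)⁻¹ =
        ((‖f - fa n‖ * √n / varNorm D f) ^ n) ^ 2 := by
      rw [pow_right_comm, div_pow (_ * _), mul_pow, Real.sq_sqrt n.cast_nonneg, ← inv_pow,
        div_div, inv_div]
    rw [← hinv]
    exact inv_le_of_inv_le₀ (by positivity) hamgm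
  have hCn : C ^ n = n.factorial * unitBallVol n :=
    Real.rpow_inv_natCast_pow (by positivity) hn0
  rw [← hCn, ← mul_pow] at hprod
  have hfin := (pow_le_pow_iff_left₀ (by positivity) (by positivity) hn0).1 (hroot.trans hprod)
  rw [div_le_iff₀ hMpos] at hfin
  rw [div_le_iff₀ (by positivity)]
  linarith
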